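/- Fix k, α₁, θ₁ ∈ ℝ. For ε > 0 let d0(ε) = Re(Tr(U_XI(k·√ε)))/2, where the walk unitary U_XI is taken with coin angle α = α₁·√ε and twist angle θ = θ₁·√ε. Then lim_{ε→0⁺} (1 − d0(ε))/ε² = (1/2)·k²·(4α₁ + θ₁)². -/

import Mathlib

open Matrix Filter Topology

noncomputable def σx : Matrix (Fin 2) (Fin 2) ℂ := !![0, 1; 1, 0]
noncomputable def σy : Matrix (Fin 2) (Fin 2) ℂ := !![0, -Complex.I; Complex.I, 0]
noncomputable def σz : Matrix (Fin 2) (Fin 2) ℂ := !![1, 0; 0, -1]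

/-- Rotation about the x-axis by angle `t`. -/
noncomputable def Rx (t : ℝ) : Matrix (Fin 2) (Fin 2) ℂ :=
  !![(Real.cos (t/2) : ℂ), -Complex.I * Real.sin (t/2);
     -Complex.I * Real.sin (t/2), (Real.cos (t/2) : ℂ)]

/-- Rotation about the y-axis by angle `t`. -/
noncomputable def Ry (t : ℝ) : Matrix (Fin 2) (Fin 2) ℂ :=
  !![(Real.cos (t/2) : ℂ), -(Real.sin (t/2) : ℂ);
     (Real.sin (t/2) : ℂ), (Real.cos (t/2) : ℂ)]

/-- Rotation about the z-axis by angle `t`. -/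
noncomputable def Rz (t : ℝ) : Matrix (Fin 2) (Fin 2) ℂ :=
  !![Complex.exp (-(Complex.I * t) / 2), 0; 0, Complex.exp ((Complex.I * t) / 2)]

/-- Fourier-space shift operator at momentum `κ`. -/
noncomputable def Sh (κ : ℝ) : Matrix (Fin 2) (Fin 2) ℂ :=
  !![Complex.exp (Complex.I * κ), 0; 0, Complex.exp (-(Complex.I * κ))]

/-- The coin operator `Cα`. -/
noncomputable def Calpha (α : ℝ) : Matrix (Fin 2) (Fin 2) ℂ :=
  !![(Real.sin α : ℂ), -Complex.I * Real.cos α;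
     Complex.I * Real.cos α, -(Real.sin α : ℂ)]

/-- The coin operator `Cβ`. -/
noncomputable def Cbeta (α : ℝ) : Matrix (Fin 2) (Fin 2) ℂ :=
  !![-(Real.cos α : ℂ), -Complex.I * Real.sin α;
     -Complex.I * Real.sin α, -(Real.cos α : ℂ)]

/-- The massless homogeneous Y–Y twisted quantum walk unitary at momentum `k`,
coin angle `α` and twist angle `θ`: `U_YY = (W_β · W_α)²` with
`W_α = S(k)·Cα` and `W_β = R_y(−θ)·S(k)·R_y(θ)·Cβ`. -/
noncomputable def UYY (k α θ : ℝ) : Matrix (Fin 2) (Fin 2) ℂ :=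
  (Ry (-θ) * Sh k * Ry θ * Cbeta α * (Sh k * Calpha α)) *
    (Ry (-θ) * Sh k * Ry θ * Cbeta α * (Sh k * Calpha α))

/-- The massless alternate-twist walk unitary at momentum `k`, coin angle `α`
and twist angle `θ`: `U_XI = W_{β2} · W_α · W_{β1} · W_α` with `W_α = S(k)·Cα`,
`W_{β1} = R_x(−θ)·S(k)·R_x(θ)·Cβ` and `W_{β2} = S(k)·Cβ`. -/
noncomputable def UXI (k α θ : ℝ) : Matrix (Fin 2) (Fin 2) ℂ :=
  (Sh k * Cbeta α) * (Sh k * Calpha α) *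
    (Rx (-θ) * Sh k * Rx θ * Cbeta α) * (Sh k * Calpha α)

/-!
Since `Calpha α = σy * Rx (-2α)` and `Cbeta α = -Rx (-2α)`, and conjugation by `σy` inverts both
`Sh` and `Rx`, the two copies of `σy` in `UXI` cancel at the price of inverting everything between
them: `UXI = (S R(-2α) S) R(2α + θ) (S⁻¹ R(2α - θ) S⁻¹) R(-2α)`. As `S σx S = σx`, a sandwich
`S R(t) S` equals `cos (t / 2) S² - i sin (t / 2) σx`, so the trace has four elementary terms, and
`1 - d0 = 2 sin² k sin² (θ / 2) + sin² (2k) sin (2α) (sin (2α) + sin θ) / 2`.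
Each summand is a product of four sines of angles of size `√ε`.
-/

lemma Rx_eq (t : ℝ) :
    Rx t = (Real.cos (t / 2) : ℂ) • 1 - (Complex.I * Real.sin (t / 2)) • σx := by
  ext i j
  fin_cases i <;> fin_cases j <;> simp [Rx, σx]

lemma σx_mul_σx : σx * σx = 1 := by
  simp [σx, one_fin_two]

lemma σy_mul_σy : σy * σy = 1 := by
  simp [σy, one_fin_two]

lemma σy_mul_σx : σy * σx = -(σx * σy) := by
  simp [σx, σy]

lemma Rx_mul_Rx (s t : ℝ) : Rx s * Rx t = Rx (s + t) := by
  rw [Rx_eq, Rx_eq, Rx_eq, add_div, Real.cos_add, Real.sin_add]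
  simp only [mul_sub, sub_mul, smul_mul_smul_comm, σx_mul_σx, one_mul, mul_one]
  push_cast
  match_scalars
  · linear_combination Complex.sin (s / 2) * Complex.sin (t / 2) * Complex.I_sq
  · ring

lemma commute_σx_Rx (t : ℝ) : Commute σx (Rx t) := by
  simp [Commute, SemiconjBy, Rx_eq, mul_sub, sub_mul]

lemma semiconjBy_σy_Rx (t : ℝ) : SemiconjBy σy (Rx t) (Rx (-t)) := by
  simp [SemiconjBy, Rx_eq, mul_sub, add_mul, σy_mul_σx, neg_div]

lemma semiconjBy_σx_Sh (κ : ℝ) : SemiconjBy σx (Sh κ) (Sh (-κ)) := by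
  simp [SemiconjBy, σx, Sh]

lemma semiconjBy_σy_Sh (κ : ℝ) : SemiconjBy σy (Sh κ) (Sh (-κ)) := by
  simp [SemiconjBy, σy, Sh, mul_comm]

lemma Sh_mul_Sh (κ μ : ℝ) : Sh κ * Sh μ = Sh (κ + μ) := by
  simp [Sh, ← Complex.exp_add, mul_add, add_comm]

lemma Sh_zero : Sh 0 = 1 := by
  simp [Sh, one_fin_two]

lemma Calpha_eq_σy_mul_Rx (α : ℝ) : Calpha α = σy * Rx (-(2 * α)) := by
  have h : -(2 * α) / 2 = -α := by ring
  simp [Calpha, σy, Rx, h, ← mul_assoc]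

lemma Cbeta_eq_neg_Rx (α : ℝ) : Cbeta α = -Rx (-(2 * α)) := by
  have h : -(2 * α) / 2 = -α := by ring
  simp [Cbeta, Rx, h]

/-- The time-symmetric step of the walk: a rotation about the x-axis between two equal shifts. The
unitary `UXI` is built from one such step at momentum `k` and one at `-k`. -/
noncomputable def symmStep (κ t : ℝ) : Matrix (Fin 2) (Fin 2) ℂ :=
  Sh κ * Rx t * Sh κ

lemma symmStep_eq (κ t : ℝ) :
    symmStep κ t =
      (Real.cos (t / 2) : ℂ) • Sh (2 * κ) - (Complex.I * Real.sin (t / 2)) • σx := by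
  have hσx : Sh κ * σx * Sh κ = σx := by
    rw [mul_assoc, (semiconjBy_σx_Sh _).eq, ← mul_assoc, Sh_mul_Sh, add_neg_cancel, Sh_zero,
      one_mul]
  simp only [symmStep, Rx_eq, mul_sub, sub_mul, mul_smul_comm, smul_mul_assoc, mul_one, hσx,
    Sh_mul_Sh, two_mul]

lemma Sh_mul_Rx_mul_Sh_neg (κ t : ℝ) :
    Sh κ * Rx t * Sh (-κ) =
      (Real.cos (t / 2) : ℂ) • 1 - (Complex.I * Real.sin (t / 2)) • (Sh (2 * κ) * σx) := by
  have hσx : Sh κ * σx * Sh (-κ) = Sh (2 * κ) * σx := by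
    rw [mul_assoc, (semiconjBy_σx_Sh _).eq, neg_neg, ← mul_assoc, Sh_mul_Sh, two_mul]
  simp only [Rx_eq, mul_sub, sub_mul, mul_smul_comm, smul_mul_assoc, mul_one, hσx, Sh_mul_Sh,
    add_neg_cancel, Sh_zero]

lemma trace_Rx (t : ℝ) : (Rx t).trace = 2 * Real.cos (t / 2) := by
  rw [Rx, trace_fin_two_of, two_mul]

lemma trace_Sh (κ : ℝ) : (Sh κ).trace = 2 * Real.cos κ := by
  rw [Sh, trace_fin_two_of, Complex.ofReal_cos, Complex.two_cos]
  ring_nf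

lemma trace_Sh_mul_σx (κ : ℝ) : (Sh κ * σx).trace = 0 := by
  simp [Sh, σx]

lemma trace_Sh_mul_σx_mul_Rx (κ t : ℝ) :
    (Sh κ * σx * Rx t).trace = -(2 * Complex.I * Real.sin (t / 2) * Real.cos κ) := by
  have h : Sh κ * σx * Rx t =
      (Real.cos (t / 2) : ℂ) • (Sh κ * σx) - (Complex.I * Real.sin (t / 2)) • Sh κ := by
    simp [Rx_eq, mul_sub, mul_assoc, σx_mul_σx]
  rw [h, trace_sub, trace_smul, trace_smul, trace_Sh_mul_σx, trace_Sh, smul_eq_mul, smul_eq_mul]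
  ring

lemma trace_Sh_mul_Rx_mul_Sh_neg_mul_Rx (κ s t : ℝ) :
    (Sh κ * Rx s * Sh (-κ) * Rx t).trace =
      2 * (Real.cos (s / 2) * Real.cos (t / 2) -
        Real.sin (s / 2) * Real.sin (t / 2) * Real.cos (2 * κ)) := by
  rw [Sh_mul_Rx_mul_Sh_neg, sub_mul, smul_mul_assoc, smul_mul_assoc, one_mul, trace_sub,
    trace_smul, trace_smul, trace_Rx, trace_Sh_mul_σx_mul_Rx, smul_eq_mul, smul_eq_mul]
  linear_combination
    2 * Real.sin (s / 2) * Real.sin (t / 2) * Real.cos (2 * κ) * Complex.I_sq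

lemma trace_Sh_mul_Rx_mul_σx_mul_Rx (κ s t : ℝ) :
    (Sh κ * Rx s * σx * Rx t).trace =
      -(2 * Complex.I * Real.sin ((s + t) / 2) * Real.cos κ) := by
  rw [mul_assoc (Sh κ), ← (commute_σx_Rx s).eq, ← mul_assoc, mul_assoc, Rx_mul_Rx,
    trace_Sh_mul_σx_mul_Rx]

lemma trace_σx_mul_Rx_mul_Sh_mul_Rx (κ s t : ℝ) :
    (σx * Rx s * Sh κ * Rx t).trace =
      -(2 * Complex.I * Real.sin ((s + t) / 2) * Real.cos κ) := by
  rw [mul_assoc, trace_mul_comm, ← mul_assoc, trace_Sh_mul_Rx_mul_σx_mul_Rx, add_comm t s]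

lemma trace_σx_mul_Rx_mul_σx_mul_Rx (s t : ℝ) :
    (σx * Rx s * σx * Rx t).trace = 2 * Real.cos ((s + t) / 2) := by
  rw [(commute_σx_Rx s).eq, mul_assoc (Rx s), σx_mul_σx, mul_one, Rx_mul_Rx, trace_Rx]

lemma trace_symmStep_mul_Rx_mul_symmStep_neg_mul_Rx (κ a b s t : ℝ) :
    (symmStep κ a * Rx s * symmStep (-κ) b * Rx t).trace =
      2 * (Real.cos ((a + b) / 2) * Real.cos ((s + t) / 2) -
        Real.cos (2 * κ) * Real.sin ((a + b) / 2) * Real.sin ((s + t) / 2) +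
        2 * Real.sin (2 * κ) ^ 2 * Real.cos (a / 2) * Real.cos (b / 2) *
          Real.sin (s / 2) * Real.sin (t / 2)) := by
  have hκ : Real.cos (2 * (2 * κ)) = 1 - 2 * Real.sin (2 * κ) ^ 2 := by
    rw [Real.cos_two_mul, Real.cos_sq']
    ring
  rw [symmStep_eq, symmStep_eq, mul_neg 2 κ]
  simp only [sub_mul, mul_sub, smul_mul_assoc, mul_smul_comm, trace_sub, trace_smul, smul_eq_mul,
    trace_Sh_mul_Rx_mul_Sh_neg_mul_Rx, trace_Sh_mul_Rx_mul_σx_mul_Rx,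
    trace_σx_mul_Rx_mul_Sh_mul_Rx, trace_σx_mul_Rx_mul_σx_mul_Rx, hκ, Real.cos_neg, add_div,
    Real.cos_add, Real.sin_add]
  push_cast
  linear_combination
    2 * (Complex.cos (2 * κ) *
        (Complex.sin (a / 2) * Complex.cos (b / 2) + Complex.cos (a / 2) * Complex.sin (b / 2)) *
        (Complex.sin (s / 2) * Complex.cos (t / 2) + Complex.cos (s / 2) * Complex.sin (t / 2)) +
      Complex.sin (a / 2) * Complex.sin (b / 2) *
        (Complex.cos (s / 2) * Complex.cos (t / 2) - Complex.sin (s / 2) * Complex.sin (t / 2))) *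
      Complex.I_sq

lemma UXI_eq_symmStep_mul (k α θ : ℝ) :
    UXI k α θ =
      symmStep k (-(2 * α)) * Rx (2 * α + θ) * symmStep (-k) (2 * α - θ) * Rx (-(2 * α)) := by
  have hσy : σy * (Rx (-(2 * α)) * Rx (-θ) * (Sh k * (Rx θ * Rx (-(2 * α))) * Sh k)) * σy =
      Rx (2 * α + θ) * symmStep (-k) (2 * α - θ) := by
    have h := (semiconjBy_σy_Rx (-(2 * α) + -θ)).mul_right
      (((semiconjBy_σy_Sh k).mul_right (semiconjBy_σy_Rx (θ + -(2 * α)))).mul_right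
        (semiconjBy_σy_Sh k))
    have hs : -(-(2 * α) + -θ) = 2 * α + θ := by ring
    have hb : -(θ + -(2 * α)) = 2 * α - θ := by ring
    rw [Rx_mul_Rx, Rx_mul_Rx, h.eq, mul_assoc, σy_mul_σy, mul_one, hs, hb, symmStep]
  calc UXI k α θ
      = symmStep k (-(2 * α)) *
          (σy * (Rx (-(2 * α)) * Rx (-θ) * (Sh k * (Rx θ * Rx (-(2 * α))) * Sh k)) * σy) *
            Rx (-(2 * α)) := by
        simp only [UXI, symmStep, Calpha_eq_σy_mul_Rx, Cbeta_eq_neg_Rx, mul_neg, neg_mul, neg_neg,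
          mul_assoc]
    _ = symmStep k (-(2 * α)) * Rx (2 * α + θ) * symmStep (-k) (2 * α - θ) *
          Rx (-(2 * α)) := by
        rw [hσy, ← mul_assoc]

lemma trace_UXI (k α θ : ℝ) :
    (UXI k α θ).trace =
      (2 * (Real.cos (θ / 2) ^ 2 + Real.cos (2 * k) * Real.sin (θ / 2) ^ 2 -
        Real.sin (2 * k) ^ 2 * Real.sin (2 * α) *
          (Real.sin (α + θ / 2) * Real.cos (α - θ / 2))) : ℝ) := by
  have hab : (-(2 * α) + (2 * α - θ)) / 2 = -(θ / 2) := by ring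
  have hst : (2 * α + θ + -(2 * α)) / 2 = θ / 2 := by ring
  have ha : -(2 * α) / 2 = -α := by ring
  have hb : (2 * α - θ) / 2 = α - θ / 2 := by ring
  have hs : (2 * α + θ) / 2 = α + θ / 2 := by ring
  rw [UXI_eq_symmStep_mul, trace_symmStep_mul_Rx_mul_symmStep_neg_mul_Rx, hab, hst, ha,
    hb, hs, Real.cos_neg, Real.sin_neg, Real.cos_neg, Real.sin_neg, Real.sin_two_mul α]
  push_cast
  ring

lemma one_sub_re_trace_UXI_div_two (k α θ : ℝ) :
    1 - (UXI k α θ).trace.re / 2 =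
      2 * Real.sin k ^ 2 * Real.sin (θ / 2) ^ 2 +
        Real.sin (2 * k) ^ 2 * Real.sin (2 * α) * (Real.sin (2 * α) + Real.sin θ) / 2 := by
  have hsum : Real.sin (2 * α) + Real.sin θ =
      2 * (Real.sin (α + θ / 2) * Real.cos (α - θ / 2)) := by
    have hs : (2 * α + θ) / 2 = α + θ / 2 := by ring
    have hd : (2 * α - θ) / 2 = α - θ / 2 := by ring
    rw [Real.sin_add_sin, hs, hd, mul_assoc]
  rw [trace_UXI, Complex.ofReal_re, hsum, Real.cos_sq', Real.cos_two_mul, Real.cos_sq']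
  ring

lemma tendsto_sin_mul_div_nhdsNE_zero (a : ℝ) :
    Tendsto (fun x : ℝ => Real.sin (a * x) / x) (𝓝[≠] 0) (𝓝 a) := by
  have h : HasDerivAt (fun x : ℝ => Real.sin (a * x)) a 0 := by
    simpa using ((hasDerivAt_id (0 : ℝ)).const_mul a).sin
  simpa [div_eq_inv_mul] using h.tendsto_slope_zero

lemma tendsto_one_sub_re_trace_UXI_div (k α θ : ℝ) :
    Tendsto (fun x : ℝ => (1 - (UXI (k * x) (α * x) (θ * x)).trace.re / 2) / x ^ 4)
      (𝓝[≠] 0) (𝓝 ((1 / 2) * k ^ 2 * (4 * α + θ) ^ 2)) := by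
  have hsin := tendsto_sin_mul_div_nhdsNE_zero
  have key := ((((hsin k).pow 2).const_mul 2).mul ((hsin (θ / 2)).pow 2)).add
    (((((hsin (2 * k)).pow 2).mul (hsin (2 * α))).mul
      ((hsin (2 * α)).add (hsin θ))).div_const 2)
  convert key using 2 with x
  · rw [one_sub_re_trace_UXI_div_two, ← mul_assoc 2 k, ← mul_assoc 2 α, mul_div_right_comm θ x]
    ring
  · ring

lemma tendsto_sqrt_nhdsGT_zero : Tendsto Real.sqrt (𝓝[>] 0) (𝓝[>] 0) := by
  refine tendsto_nhdsWithin_iff.mpr ⟨?_, ?_⟩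
  · simpa using (Real.continuous_sqrt.tendsto 0).mono_left nhdsWithin_le_nhds
  · filter_upwards [self_mem_nhdsWithin] with x hx using Real.sqrt_pos.mpr hx

open Filter Topology in
/-- Continuous-limit expansion of `d0` for the alternate-twist walk:
`(1 − d0(ε))/ε² → (1/2)k²(4α₁ + θ₁)²` as `ε → 0⁺`. -/
theorem UXI_d0_continuous_limit (k α₁ θ₁ : ℝ) :
    Tendsto
      (fun ε : ℝ =>
        (1 - (UXI (k * Real.sqrt ε) (α₁ * Real.sqrt ε) (θ₁ * Real.sqrt ε)).trace.re / 2)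
          / ε ^ 2)
      (nhdsWithin 0 (Set.Ioi 0))
      (nhds ((1/2) * k ^ 2 * (4 * α₁ + θ₁) ^ 2)) := by
  have hsqrt : Tendsto Real.sqrt (𝓝[>] 0) (𝓝[≠] 0) :=
    tendsto_sqrt_nhdsGT_zero.mono_right (nhdsGT_le_nhdsNE 0)
  refine ((tendsto_one_sub_re_trace_UXI_div k α₁ θ₁).comp hsqrt).congr' ?_
  filter_upwards [self_mem_nhdsWithin] with ε (hε : 0 < ε)
  have hpow : Real.sqrt ε ^ 4 = ε ^ 2 := by
    rw [pow_mul (Real.sqrt ε) 2 2, Real.sq_sqrt hε.le]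
  simp only [Function.comp_apply, hpow]
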